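/- Let J₀ be a two-sided p-periodic Jacobi matrix with all gaps open, and let c : {(a,b) ∈ ℝ^p × ℝ^p : a_j > 0 for all j} → ℝ^{p+1} be the map sending (a,b) to the vector of coefficients of the degree-p discriminant polynomial Δ_{(a,b)} (this map is smooth on its domain). Then at every point (a,b) of the isospectral torus T_{J₀}, viewed as a subset of ℝ^{2p} via one period, the derivative Dc(a,b) : ℝ^{2p} → ℝ^{p+1} is surjective; equivalently, the gradients of the p+1 coefficients of Δ_{(a,b)} are linearly independent at (a,b), and hence span the (p+1)-dimensional normal space to T_{J₀} there. -/

import Mathlib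

open scoped ComplexConjugate

noncomputable section

/-- The transfer matrix `Λ_n(x) = (1/a_n)·[[x − b_n, −1], [a_n², 0]]`. -/
def lamMat (a b : ℤ → ℝ) (n : ℤ) : Matrix (Fin 2) (Fin 2) (Polynomial ℝ) :=
  Polynomial.C (a n)⁻¹ • !![Polynomial.X - Polynomial.C (b n), -1;
    Polynomial.C ((a n) ^ 2), 0]

/-- The ordered product `Λ_n ⋯ Λ_2 Λ_1`. -/
def tMat (a b : ℤ → ℝ) : ℕ → Matrix (Fin 2) (Fin 2) (Polynomial ℝ)
  | 0 => 1
  | n + 1 => lamMat a b ((n : ℤ) + 1) * tMat a b n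

/-- The discriminant `Δ_{(a,b)}(x) = Tr(Λ_p(x) ⋯ Λ_1(x))`. -/
def disc (a b : ℤ → ℝ) (p : ℕ) : Polynomial ℝ := Matrix.trace (tMat a b p)

/-- Membership in the isospectral torus. -/
def InTorus (p : ℕ) (a0 b0 a' b' : ℤ → ℝ) : Prop :=
  (∀ n, 0 < a' n) ∧ Function.Periodic a' (p : ℤ) ∧ Function.Periodic b' (p : ℤ) ∧
    disc a' b' p = disc a0 b0 p

/-- All gaps open: `Δ'(x) ≠ 0` whenever `Δ(x) = ±2` (equivalently, every zero of
`Δ² − 4` is simple). -/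
def AllGapsOpen (a0 b0 : ℤ → ℝ) (p : ℕ) : Prop :=
  ∀ x : ℝ, ((disc a0 b0 p).eval x = 2 ∨ (disc a0 b0 p).eval x = -2) →
    (Polynomial.derivative (disc a0 b0 p)).eval x ≠ 0

/-- Periodic extension: `(pext v)_n = v_{(n−1) mod p}`, so that sites `1,…,p`
carry `v_0,…,v_{p−1}`. -/
def pext {p : ℕ} (v : Fin p → ℝ) : ℤ → ℝ := fun n =>
  if h : 0 < p then
    v ⟨((n - 1) % (p : ℤ)).toNat, by
      have hp' : (0 : ℤ) < (p : ℤ) := by exact_mod_cast h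
      have h1 : 0 ≤ (n - 1) % (p : ℤ) := Int.emod_nonneg _ (ne_of_gt hp')
      have h2 : (n - 1) % (p : ℤ) < (p : ℤ) := Int.emod_lt_of_pos _ hp'
      omega⟩
  else 0

/-- The map sending one period of Jacobi parameters to the `p+1` coefficients of
the discriminant polynomial. -/
def coeffMap (p : ℕ) (vw : (Fin p → ℝ) × (Fin p → ℝ)) : Fin (p + 1) → ℝ :=
  fun i => (disc (pext vw.1) (pext vw.2) p).coeff i

open Polynomial in
lemma tMat_succ_zero (a b : ℤ → ℝ) (n : ℕ) (c : Fin 2) :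
    tMat a b (n + 1) 0 c = C (a (n + 1))⁻¹ *
      ((X - C (b (n + 1))) * tMat a b n 0 c - tMat a b n 1 c) := by
  simp [tMat, lamMat, Matrix.mul_apply, Fin.sum_univ_two]
  ring

open Polynomial in
lemma tMat_succ_one (a b : ℤ → ℝ) (n : ℕ) (c : Fin 2) :
    tMat a b (n + 1) 1 c = C (a (n + 1)) * tMat a b n 0 c := by
  have h : (a (n + 1))⁻¹ * (a (n + 1)) ^ 2 = a (n + 1) := by
    by_cases h : a (n + 1) = 0
    · simp [h]
    · field_simp
  have h2 : (C (a (n + 1)) : ℝ[X]) = C (a (n + 1))⁻¹ * C ((a (n + 1)) ^ 2) := by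
    rw [← C_mul, h]
  rw [h2]
  simp [tMat, lamMat, Matrix.mul_apply, Fin.sum_univ_two]

lemma lamMat_det (a b : ℤ → ℝ) (n : ℤ) (h : a n ≠ 0) : (lamMat a b n).det = 1 := by
  have h2 : (Polynomial.C (a n)⁻¹ * Polynomial.C (a n) : Polynomial ℝ) = 1 := by
    rw [← Polynomial.C_mul, inv_mul_cancel₀ h, Polynomial.C_1]
  simp only [lamMat, Matrix.det_fin_two, Matrix.smul_apply, smul_eq_mul, Matrix.of_apply,
    Matrix.cons_val', Matrix.cons_val_zero, Matrix.cons_val_one, Polynomial.C_pow]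
  simp
  linear_combination (Polynomial.C (a n)⁻¹ * Polynomial.C (a n) + 1) * h2

lemma tMat_det (a b : ℤ → ℝ) (h : ∀ n, a n ≠ 0) (n : ℕ) : (tMat a b n).det = 1 := by
  induction n with
  | zero => simp [tMat]
  | succ n ih => rw [tMat, Matrix.det_mul, ih, lamMat_det a b _ (h _), one_mul]

/-- a nonzero off-diagonal entry of known degree -/
lemma tMat_deg (a b : ℤ → ℝ) (h : ∀ n, a n ≠ 0) (n : ℕ) :
    (tMat a b (n + 1) 0 1).coeff n ≠ 0 ∧ (∀ k, n < k → (tMat a b (n + 1) 0 1).coeff k = 0) ∧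
    (∀ k, n ≤ k → (tMat a b (n + 1) 1 1).coeff k = 0) := by
  induction n with
  | zero =>
    have h1 := tMat_succ_zero a b 0 1
    have h2 := tMat_succ_one a b 0 1
    simp only [tMat, Matrix.one_apply] at h1 h2
    simp at h1 h2
    simp only [tMat]
    simp only [Matrix.mul_one, h1, h2, CharP.cast_eq_zero, zero_add]
    refine ⟨?_, ?_, ?_⟩
    · simpa using h 1
    · intro k hk
      rw [Polynomial.coeff_neg, Polynomial.coeff_C_of_ne_zero (by omega), neg_zero]
    · simp
  | succ n ih =>
    obtain ⟨i1, i2, i3⟩ := ih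
    refine ⟨?_, ?_, ?_⟩
    · rw [tMat_succ_zero, Polynomial.coeff_C_mul, Polynomial.coeff_sub, sub_mul,
        Polynomial.coeff_sub, Polynomial.coeff_X_mul, Polynomial.coeff_C_mul, i2 (n + 1) (by omega),
        i3 (n + 1) (by omega)]
      simpa using ⟨h _, i1⟩
    · intro k hk
      obtain ⟨k, rfl⟩ : ∃ m, k = m + 1 := ⟨k - 1, by omega⟩
      rw [tMat_succ_zero, Polynomial.coeff_C_mul, Polynomial.coeff_sub, sub_mul,
        Polynomial.coeff_sub, Polynomial.coeff_X_mul, Polynomial.coeff_C_mul, i2 _ (by omega),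
        i2 _ (by omega), i3 _ (by omega)]
      simp
    · intro k hk
      rw [tMat_succ_one, Polynomial.coeff_C_mul, i2 _ (by omega), mul_zero]

/-- reality of the zeros of the lower left entry -/
lemma root_real (a b : ℤ → ℝ) (h : ∀ n, a n ≠ 0) (p : ℕ) (hp : 0 < p) (z : ℂ)
    (hz : Polynomial.aeval z (tMat a b p 1 0) = 0) : z.im = 0 := by
  have key : ∀ n : ℕ, ((starRingEnd ℂ) (Polynomial.aeval z (tMat a b n 0 0)) *
      Polynomial.aeval z (tMat a b n 1 0)).im =
      - z.im * ∑ i ∈ Finset.range n, Complex.normSq (Polynomial.aeval z (tMat a b i 0 0)) := by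
    intro n
    induction n with
    | zero => simp [tMat]
    | succ n ih =>
      rw [Finset.sum_range_succ, mul_add, ← ih, tMat_succ_zero, tMat_succ_one]
      have ha := h (n + 1)
      simp only [map_mul, map_sub, Polynomial.aeval_C, Polynomial.aeval_X]
      generalize Polynomial.aeval z (tMat a b n 1 0) = t at *
      generalize Polynomial.aeval z (tMat a b n 0 0) = s at *
      simp [Complex.normSq_apply, ← Complex.ofReal_inv]
      field_simp
      ring
  have k := key p
  rw [hz] at k
  simp only [mul_zero, Complex.zero_im] at k
  have h1 : (1 : ℝ) ≤ ∑ i ∈ Finset.range p,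
      Complex.normSq (Polynomial.aeval z (tMat a b i 0 0)) := by
    have := Finset.single_le_sum
      (f := fun i => Complex.normSq (Polynomial.aeval z (tMat a b i 0 0)))
      (fun i _ => Complex.normSq_nonneg _) (Finset.mem_range.2 hp)
    simpa [tMat] using this
  have := (zero_eq_mul.1 k).resolve_right (by linarith)
  simpa using this

/-- the ideal generated by the traceless part is everything -/
lemma ideal_top (a b : ℤ → ℝ) (h : ∀ n, a n ≠ 0) (p : ℕ) (hp : 0 < p)
    (hg : AllGapsOpen a b p) :
    Ideal.span {tMat a b p 0 1, tMat a b p 1 0, tMat a b p 0 0 - tMat a b p 1 1} = ⊤ := by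
  set I := Ideal.span {tMat a b p 0 1, tMat a b p 1 0, tMat a b p 0 0 - tMat a b p 1 1} with hI
  obtain ⟨g, hgI⟩ := (inferInstance : I.IsPrincipal).principal
  have hgI : I = Ideal.span {g} := hgI
  by_cases hd : g.degree = 0
  · rw [hgI, Ideal.span_singleton_eq_top]
    exact Polynomial.isUnit_iff_degree_eq_zero.2 hd
  exfalso
  obtain ⟨z, hz⟩ := IsAlgClosed.exists_aeval_eq_zero ℂ g hd
  have hall : ∀ f ∈ I, Polynomial.aeval z f = 0 := by
    intro f hf
    rw [hgI, Ideal.mem_span_singleton] at hf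
    obtain ⟨c, rfl⟩ := hf
    simp [hz]
  have e1 := hall (tMat a b p 0 1) (Ideal.subset_span (by simp))
  have e2 := hall (tMat a b p 1 0) (Ideal.subset_span (by simp))
  have e3 := hall (tMat a b p 0 0 - tMat a b p 1 1) (Ideal.subset_span (by simp))
  have hre := root_real a b h p hp z e2
  obtain ⟨x, rfl⟩ : ∃ x : ℝ, z = (x : ℂ) := ⟨z.re, by apply Complex.ext <;> simp [hre]⟩
  have cv : ∀ f : Polynomial ℝ, Polynomial.aeval (x : ℂ) f = 0 → f.eval x = 0 := by
    intro f hf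
    have : Polynomial.aeval (x : ℂ) f = ((f.eval x : ℝ) : ℂ) := by
      have := Polynomial.aeval_algebraMap_apply ℂ x f
      simpa using this
    rw [this] at hf
    exact_mod_cast hf
  replace e1 := cv _ e1
  replace e2 := cv _ e2
  replace e3 := cv _ e3
  have hdet := tMat_det a b h p
  rw [Matrix.det_fin_two] at hdet
  have hx := hg x
  simp only [disc, Matrix.trace_fin_two] at hx
  generalize tMat a b p 0 0 = α at *
  generalize tMat a b p 0 1 = β at *
  generalize tMat a b p 1 0 = γ at *
  generalize tMat a b p 1 1 = δ at *
  have d1 := congrArg (Polynomial.eval x) hdet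
  have d2 := congrArg (fun f => Polynomial.eval x (Polynomial.derivative f)) hdet
  simp [e1, e2] at d1 d2 e3 hx
  have e4 : α.eval x = δ.eval x := by linarith
  rw [e4] at d1 d2 hx
  have : δ.eval x = 1 ∨ δ.eval x = -1 := by
    rcases mul_eq_zero.1 (show (δ.eval x - 1) * (δ.eval x + 1) = 0 by linarith) with h | h
    · left; linarith
    · right; linarith
  apply hx
  · rcases this with h | h <;> rw [h] <;> norm_num
  · rcases this with h | h <;> rw [h] at d2 <;> linarith

open Polynomial in
lemma core (p : ℕ) (A B : ℕ → ℝ) (hA : ∀ j, A j ≠ 0) (η β γ : ℕ → ℝ[X])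
    (r1 : ∀ j < p, γ (j + 1) = - C (A j ^ 2) * β j)
    (r2 : ∀ j < p, η (j + 1) = - (2 * (X - C (B j)) * β j + η j))
    (r3 : ∀ j < p, C (A j ^ 2) * β (j + 1) =
      (X - C (B j)) * η j - γ j + (X - C (B j)) ^ 2 * β j)
    (hη : η p = η 0) (hβ : β p = β 0) (hγ : γ p = γ 0) (hp : 0 < p)
    (L : ℝ[X] →ₗ[ℝ] ℝ) (l1 : ∀ j ≤ p, L (η j) = 0) (l2 : ∀ j ≤ p, L (γ j) = 0)
    (l3 : ∀ k, L (X ^ k * β 0) = 0) :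
    ∀ k, ∀ j ≤ p, L (X ^ k * η j) = 0 ∧ L (X ^ k * γ j) = 0 ∧ L (X ^ k * β j) = 0 ∧
      L (X ^ (k + 1) * β j) = 0 := by
  have LC : ∀ (c : ℝ) (f : ℝ[X]), L (C c * f) = c * L f := by
    intro c f; rw [← smul_eq_C_mul, map_smul, smul_eq_mul]
  have q1 : ∀ k, ∀ j < p, L (X ^ k * γ (j + 1)) = - (A j ^ 2) * L (X ^ k * β j) := by
    intro k j hj
    rw [r1 j hj, show X ^ k * (- C (A j ^ 2) * β j) = C (-(A j ^ 2)) * (X ^ k * β j) by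
      rw [C_neg]; ring, LC]
  have q2 : ∀ k, ∀ j < p, L (X ^ k * η (j + 1)) =
      - (2 * L (X ^ (k + 1) * β j)) + 2 * B j * L (X ^ k * β j) - L (X ^ k * η j) := by
    intro k j hj
    rw [r2 j hj, show X ^ k * -(2 * (X - C (B j)) * β j + η j) =
      C (-2) * (X ^ (k + 1) * β j) + C (2 * B j) * (X ^ k * β j) - X ^ k * η j by
        simp only [C_neg, C_mul, C_ofNat]; ring, map_sub, map_add, LC, LC]
    ring
  have q3 : ∀ k, ∀ j < p, A j ^ 2 * L (X ^ k * β (j + 1)) =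
      L (X ^ (k + 1) * η j) - B j * L (X ^ k * η j) - L (X ^ k * γ j) +
      (L (X ^ (k + 2) * β j) - 2 * B j * L (X ^ (k + 1) * β j) + B j ^ 2 * L (X ^ k * β j)) := by
    intro k j hj
    rw [← LC, show C (A j ^ 2) * (X ^ k * β (j + 1)) = X ^ k * (C (A j ^ 2) * β (j + 1)) by ring,
      r3 j hj, show X ^ k * ((X - C (B j)) * η j - γ j + (X - C (B j)) ^ 2 * β j) =
      X ^ (k + 1) * η j - C (B j) * (X ^ k * η j) - X ^ k * γ j +
      (X ^ (k + 2) * β j - C (2 * B j) * (X ^ (k + 1) * β j) + C (B j ^ 2) * (X ^ k * β j)) by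
        simp only [C_mul, C_ofNat, C_pow]; ring]
    simp only [map_sub, map_add, LC]
  have gz : ∀ k, (∀ j ≤ p, L (X ^ k * β j) = 0) → ∀ j ≤ p, L (X ^ k * γ j) = 0 := by
    intro k hk j hj
    rcases j with _ | j
    · rw [← hγ]
      obtain ⟨m, rfl⟩ : ∃ m, p = m + 1 := ⟨p - 1, by omega⟩
      rw [q1 k m (by omega), hk m (by omega), mul_zero]
    · rw [q1 k j (by omega), hk j (by omega), mul_zero]
  have bz : ∀ k, (∀ j < p, L (X ^ k * β j) = 0) → ∀ j ≤ p, L (X ^ k * β j) = 0 := by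
    intro k hk j hj
    rcases hj.lt_or_eq with h | rfl
    · exact hk j h
    · rw [hβ]; exact hk 0 hp
  intro k
  induction k with
  | zero =>
    have b0 : ∀ j ≤ p, L (X ^ 0 * β j) = 0 := by
      apply bz
      intro j hj
      have := q1 0 j hj
      rw [pow_zero, one_mul, l2 _ (by omega)] at this
      rw [pow_zero]
      have hh := hA j
      exact (mul_eq_zero.1 this.symm).resolve_left (by simpa using hh)
    have b1 : ∀ j ≤ p, L (X ^ (0 + 1) * β j) = 0 := by
      apply bz
      intro j hj
      have := q2 0 j hj
      rw [b0 j (by omega), pow_zero, one_mul, one_mul, l1 _ (by omega), l1 _ (by omega)] at this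
      linarith
    intro j hj
    exact ⟨by simpa using l1 j hj, by simpa using l2 j hj, b0 j hj, b1 j hj⟩
  | succ k ih =>
    have g := gz (k + 1) (fun j hj => (ih j hj).2.2.2)
    have s : ∀ j < p, L (X ^ (k + 1) * η j) + L (X ^ (k + 2) * β j) = 0 := by
      intro j hj
      have := q3 k j hj
      obtain ⟨i1, i2, i3, i4⟩ := ih j (by omega)
      rw [i1, i2, i3, i4, (ih (j + 1) (by omega)).2.2.1] at this
      linarith
    have y : ∀ j ≤ p, L (X ^ (k + 1) * η j) = 0 := by
      intro j
      induction j with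
      | zero => intro _; have := s 0 hp; rw [l3, add_zero] at this; exact this
      | succ j ij =>
        intro hj
        have h1 := ij (by omega)
        have h2 := s j (by omega)
        rw [q2 _ j (by omega), (ih j (by omega)).2.2.2]
        linarith
    have e : ∀ j ≤ p, L (X ^ (k + 1 + 1) * β j) = 0 := by
      apply bz
      intro j hj
      have := s j hj
      rw [y j hj.le] at this
      linarith
    intro j hj
    exact ⟨y j hj, g j hj, (ih j hj).2.2.2, e j hj⟩
open Polynomial in
lemma lam_zero (a b : ℤ → ℝ) (n : ℤ) (M : Matrix (Fin 2) (Fin 2) ℝ[X]) (c : Fin 2) :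
    (lamMat a b n * M) 0 c = C (a n)⁻¹ * ((X - C (b n)) * M 0 c - M 1 c) := by
  simp [lamMat, Matrix.mul_apply, Fin.sum_univ_two]
  ring

open Polynomial in
lemma lam_one (a b : ℤ → ℝ) (n : ℤ) (M : Matrix (Fin 2) (Fin 2) ℝ[X]) (c : Fin 2) :
    (lamMat a b n * M) 1 c = C (a n) * M 0 c := by
  have h : (a n)⁻¹ * (a n) ^ 2 = a n := by
    by_cases h : a n = 0
    · simp [h]
    · field_simp
  have h2 : (C (a n) : ℝ[X]) = C (a n)⁻¹ * C ((a n) ^ 2) := by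
    rw [← C_mul, h]
  rw [h2]
  simp [lamMat, Matrix.mul_apply, Fin.sum_univ_two]

open Polynomial in
lemma lam_deg (a b : ℤ → ℝ) (n : ℤ) (M : Matrix (Fin 2) (Fin 2) ℝ[X]) (k : ℕ)
    (hM : ∀ i c, (M i c).natDegree ≤ k) (i c : Fin 2) :
    ((lamMat a b n * M) i c).natDegree ≤ k + 1 := by
  have h0 := hM 0 c
  have h1 := hM 1 c
  fin_cases i
  · simp only [Fin.zero_eta, lam_zero]
    refine (natDegree_C_mul_le _ _).trans ((natDegree_sub_le _ _).trans (max_le ?_ (by omega)))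
    refine natDegree_mul_le.trans ?_
    rw [natDegree_X_sub_C]; omega
  · simp only [Fin.mk_one, lam_one]
    exact (natDegree_C_mul_le _ _).trans (by omega)

open Polynomial in
lemma tMat_natDegree (a b : ℤ → ℝ) (n : ℕ) : ∀ i c, (tMat a b n i c).natDegree ≤ n := by
  induction n with
  | zero =>
    intro i c
    rw [tMat, Matrix.one_apply]; split_ifs <;> simp
  | succ n ih => intro i c; exact lam_deg _ _ _ _ _ ih i c

open Polynomial in
lemma split_mat (a b : ℤ → ℝ) (m k : ℕ) : ∃ R : Matrix (Fin 2) (Fin 2) ℝ[X],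
    (∀ i c, (R i c).natDegree ≤ k) ∧
    ∀ a' b' : ℤ → ℝ, (∀ i : ℕ, m < i → i ≤ m + k → a' i = a i ∧ b' i = b i) →
      tMat a' b' (m + k) = R * tMat a' b' m := by
  induction k with
  | zero =>
    refine ⟨1, ?_, ?_⟩
    · intro i c
      rw [Matrix.one_apply]; split_ifs <;> simp
    · intros; simp
  | succ k ih =>
    obtain ⟨R, h1, h2⟩ := ih
    refine ⟨lamMat a b ((m + k : ℕ) + 1) * R, lam_deg _ _ _ _ _ h1, ?_⟩
    intro a' b' h
    have h3 := h (m + k + 1) (by omega) (by omega)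
    rw [← add_assoc, tMat, h2 a' b' (fun i hi hj => h i hi (by omega)), Matrix.mul_assoc]
    congr 1
    push_cast at h3 ⊢
    simp only [lamMat, h3.1, h3.2]

lemma tMat_congr (a b a' b' : ℤ → ℝ) (m : ℕ)
    (h : ∀ i : ℕ, 0 < i → i ≤ m → a' i = a i ∧ b' i = b i) : tMat a' b' m = tMat a b m := by
  induction m with
  | zero => rfl
  | succ k ih =>
    have h3 := h (k + 1) (by omega) (by omega)
    rw [tMat, tMat, ih (fun i hi hj => h i hi (by omega))]
    congr 1
    push_cast at h3
    simp only [lamMat, h3.1, h3.2]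

/-- monodromy matrices based at the various sites -/
def monodromy (a b : ℤ → ℝ) (p j : ℕ) : Matrix (Fin 2) (Fin 2) (Polynomial ℝ) :=
  tMat a b j * tMat a b p * (tMat a b j).adjugate

lemma mono_zero (a b : ℤ → ℝ) (p : ℕ) : monodromy a b p 0 = tMat a b p := by
  simp [monodromy, tMat]

lemma mono_self (a b : ℤ → ℝ) (h : ∀ n, a n ≠ 0) (p : ℕ) : monodromy a b p p = tMat a b p := by
  rw [monodromy, Matrix.mul_assoc, Matrix.mul_adjugate, tMat_det a b h, one_smul, Matrix.mul_one]

lemma mono_succ (a b : ℤ → ℝ) (p j : ℕ) : monodromy a b p (j + 1) =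
    lamMat a b (j + 1) * (monodromy a b p j * (lamMat a b (j + 1)).adjugate) := by
  simp only [monodromy, tMat, Matrix.adjugate_mul_distrib, Matrix.mul_assoc]

lemma mono_eq (a b : ℤ → ℝ) (h : ∀ n, a n ≠ 0) (p j : ℕ) (R : Matrix (Fin 2) (Fin 2) (Polynomial ℝ))
    (hR : tMat a b p = R * tMat a b j) : monodromy a b p j = tMat a b j * R := by
  rw [monodromy, hR, Matrix.mul_assoc, Matrix.mul_assoc, Matrix.mul_adjugate, tMat_det a b h, one_smul,
    Matrix.mul_one]

open Polynomial in
lemma adj_entries (a b : ℤ → ℝ) (n : ℤ) (M : Matrix (Fin 2) (Fin 2) ℝ[X]) (c : Fin 2) :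
    (M * (lamMat a b n).adjugate) c 0 = - C (a n) * M c 1 ∧
    (M * (lamMat a b n).adjugate) c 1 = C (a n)⁻¹ * (M c 0 + (X - C (b n)) * M c 1) := by
  have h : (a n)⁻¹ * (a n) ^ 2 = a n := by
    by_cases h : a n = 0
    · simp [h]
    · field_simp
  have h2 : (C (a n) : ℝ[X]) = C (a n)⁻¹ * C ((a n) ^ 2) := by
    rw [← C_mul, h]
  constructor
  · rw [h2]
    simp [lamMat, Matrix.mul_apply, Fin.sum_univ_two, Matrix.adjugate_fin_two]
    ring
  · simp [lamMat, Matrix.mul_apply, Fin.sum_univ_two, Matrix.adjugate_fin_two]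
    ring

open Polynomial in
lemma mono_rec (a b : ℤ → ℝ) (h : ∀ n, a n ≠ 0) (p j : ℕ) :
    monodromy a b p (j + 1) 1 0 = - C (a (j + 1) ^ 2) * monodromy a b p j 0 1 ∧
    monodromy a b p (j + 1) 0 0 - monodromy a b p (j + 1) 1 1 =
      - (2 * (X - C (b (j + 1))) * monodromy a b p j 0 1 + (monodromy a b p j 0 0 - monodromy a b p j 1 1)) ∧
    C (a (j + 1) ^ 2) * monodromy a b p (j + 1) 0 1 =
      (X - C (b (j + 1))) * (monodromy a b p j 0 0 - monodromy a b p j 1 1) - monodromy a b p j 1 0 +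
      (X - C (b (j + 1))) ^ 2 * monodromy a b p j 0 1 := by
  have h2 : (C (a (j + 1)) * C (a (j + 1))⁻¹ : ℝ[X]) = 1 := by
    rw [← C_mul, mul_inv_cancel₀ (h _), C_1]
  rw [mono_succ]
  simp only [lam_zero, lam_one, (adj_entries _ _ _ _ _).1, (adj_entries _ _ _ _ _).2, C_pow]
  generalize monodromy a b p j 0 0 = α
  generalize monodromy a b p j 0 1 = β
  generalize monodromy a b p j 1 0 = γ
  generalize monodromy a b p j 1 1 = δ
  generalize (C (a (j + 1)) : ℝ[X]) = A at *
  generalize (C (a (j + 1))⁻¹ : ℝ[X]) = A' at *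
  generalize (X - C (b (j + 1)) : ℝ[X]) = Y at *
  refine ⟨by ring, ?_, ?_⟩
  · linear_combination (-2 * Y * β - α + δ) * h2
  · linear_combination (A * A' + 1) * (Y * α + Y ^ 2 * β - γ - Y * δ) * h2

open Polynomial in
/-- The algebraic heart: a functional killing the traceless parts vanishes. -/
lemma functional_zero (a b : ℤ → ℝ) (h : ∀ n, a n ≠ 0) (p : ℕ) (hp : 0 < p)
    (hg : AllGapsOpen a b p) (L : ℝ[X] →ₗ[ℝ] ℝ)
    (l1 : ∀ j < p, L (monodromy a b p (j + 1) 0 0 - monodromy a b p (j + 1) 1 1) = 0)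
    (l2 : ∀ j < p, L (monodromy a b p (j + 1) 1 0) = 0) (f : ℝ[X]) (hf : f.natDegree ≤ p) :
    L f = 0 := by
  have LC : ∀ (c : ℝ) (f : ℝ[X]), L (C c * f) = c * L f := by
    intro c f; rw [← smul_eq_C_mul, map_smul, smul_eq_mul]
  have hper : monodromy a b p p = monodromy a b p 0 := by rw [mono_self a b h, mono_zero]
  have l1' : ∀ j ≤ p, L (monodromy a b p j 0 0 - monodromy a b p j 1 1) = 0 := by
    intro j hj
    rcases j with _ | j
    · rw [← hper]
      obtain ⟨m, rfl⟩ : ∃ m, p = m + 1 := ⟨p - 1, by omega⟩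
      exact l1 m (by omega)
    · exact l1 j hj
  have l2' : ∀ j ≤ p, L (monodromy a b p j 1 0) = 0 := by
    intro j hj
    rcases j with _ | j
    · rw [← hper]
      obtain ⟨m, rfl⟩ : ∃ m, p = m + 1 := ⟨p - 1, by omega⟩
      exact l2 m (by omega)
    · exact l2 j hj
  -- degrees
  have hdeg : ∀ j ≤ p, ∀ i c, (monodromy a b p j i c).natDegree ≤ p := by
    intro j hj i c
    obtain ⟨k, rfl⟩ : ∃ k, p = j + k := ⟨p - j, by omega⟩
    obtain ⟨R, hR, hR2⟩ := split_mat a b j k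
    rw [mono_eq a b h _ _ R (hR2 a b (fun _ _ _ => ⟨rfl, rfl⟩)), Matrix.mul_apply]
    refine natDegree_sum_le_of_forall_le _ _ (fun x _ => natDegree_mul_le.trans ?_)
    exact add_le_add (tMat_natDegree a b j _ _) (hR _ _)
  -- the base polynomial
  set β := monodromy a b p 0 0 1 with hβdef
  have hβ : β.coeff (p - 1) ≠ 0 ∧ ∀ k, p - 1 < k → β.coeff k = 0 := by
    obtain ⟨m, rfl⟩ : ∃ m, p = m + 1 := ⟨p - 1, by omega⟩
    have := tMat_deg a b h m
    rw [hβdef, mono_zero]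
    exact ⟨this.1, this.2.1⟩
  have hβdeg : β.natDegree = p - 1 := natDegree_eq_of_le_of_coeff_ne_zero
    (natDegree_le_iff_coeff_eq_zero.2 hβ.2) hβ.1
  have hβ0 : β ≠ 0 := by rintro h0; rw [h0] at hβ; simp at hβ
  set q := β * C (β.leadingCoeff)⁻¹ with hq
  have hqm : q.Monic := monic_mul_leadingCoeff_inv hβ0
  have hqdeg : q.natDegree = p - 1 := by
    rw [hq, natDegree_mul_leadingCoeff_inv _ hβ0, hβdeg]
  have rec0 := mono_rec a b h p 0
  have Lβ : L β = 0 := by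
    have h1 := l2 0 hp
    rw [rec0.1, ← C_neg, LC] at h1
    have hh := h (((0 : ℕ) : ℤ) + 1)
    exact (mul_eq_zero.1 h1).resolve_left (by simpa using hh)
  have LXβ : L (X * β) = 0 := by
    have h1 := l1 0 hp
    rw [rec0.2.1, show -(2 * (X - C (b (((0 : ℕ) : ℤ) + 1))) * monodromy a b p 0 0 1 +
      (monodromy a b p 0 0 0 - monodromy a b p 0 1 1)) = C (-2) * (X * β) +
      C (2 * b (((0 : ℕ) : ℤ) + 1)) * β - (monodromy a b p 0 0 0 - monodromy a b p 0 1 1) by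
        simp only [C_neg, C_mul, C_ofNat, hβdef]; ring, map_sub, map_add, LC, LC, Lβ,
        l1' 0 (by omega)] at h1
    linarith
  set L' : ℝ[X] →ₗ[ℝ] ℝ := L.comp (modByMonicHom q) with hL'
  have hL'def : ∀ f, L' f = L (f %ₘ q) := fun f => rfl
  have agree : ∀ f : ℝ[X], f.natDegree ≤ p → L' f = L f := by
    intro f hf
    have e := modByMonic_add_div f q
    have hd : (f /ₘ q).natDegree ≤ 1 := by
      rw [natDegree_divByMonic _ hqm, hqdeg]; omega
    obtain ⟨c, d, hcd⟩ := exists_eq_X_add_C_of_natDegree_le_one hd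
    have : L (q * (f /ₘ q)) = 0 := by
      rw [hcd, hq, show β * C β.leadingCoeff⁻¹ * (C c * X + C d) =
        C (β.leadingCoeff⁻¹ * c) * (X * β) + C (β.leadingCoeff⁻¹ * d) * β by
          simp only [C_mul]; ring, map_add, LC, LC, Lβ, LXβ]
      simp
    conv_rhs => rw [← e, map_add, this, add_zero]
    exact hL'def f
  have kill : ∀ g, L' (g * β) = 0 := by
    intro g
    have : q ∣ g * β := by
      refine ⟨g * C β.leadingCoeff, ?_⟩
      have : (C (β.leadingCoeff)⁻¹ * C β.leadingCoeff : ℝ[X]) = 1 := by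
        rw [← C_mul, inv_mul_cancel₀ (leadingCoeff_ne_zero.2 hβ0), C_1]
      rw [hq]
      linear_combination (- g * β) * this
    rw [hL'def, (modByMonic_eq_zero_iff_dvd hqm).2 this, map_zero]
  have main := core p (fun j => a (j + 1)) (fun j => b (j + 1)) (fun j => h _)
    (fun j => monodromy a b p j 0 0 - monodromy a b p j 1 1) (fun j => monodromy a b p j 0 1)
    (fun j => monodromy a b p j 1 0)
    (fun j _ => (mono_rec a b h p j).1) (fun j _ => (mono_rec a b h p j).2.1)
    (fun j _ => (mono_rec a b h p j).2.2) (by simp only [hper]) (by simp only [hper])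
    (by simp only [hper]) hp L'
    (fun j hj => by
      rw [agree _ ((natDegree_sub_le _ _).trans (max_le (hdeg j hj _ _) (hdeg j hj _ _)))]
      exact l1' j hj)
    (fun j hj => by rw [agree _ (hdeg j hj _ _)]; exact l2' j hj)
    (fun k => kill _)
  have gen : ∀ u : ℝ[X], (∀ k, L' (X ^ k * u) = 0) → ∀ g, L' (g * u) = 0 := by
    intro u hu g
    induction g using Polynomial.induction_on' with
    | add p q hp hq => rw [add_mul, map_add, hp, hq, add_zero]
    | monomial n c =>
      rw [← C_mul_X_pow_eq_monomial, mul_assoc, ← smul_eq_C_mul, map_smul, hu, smul_zero]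
  have htop := ideal_top a b h p hp hg
  rw [← agree f hf]
  have hmem : f ∈ Ideal.span {tMat a b p 0 1, tMat a b p 1 0, tMat a b p 0 0 - tMat a b p 1 1} := by
    rw [htop]; trivial
  rw [← mono_zero] at hmem
  obtain ⟨c1, y, hy, rfl⟩ := Ideal.mem_span_insert.1 hmem
  obtain ⟨c2, y2, hy2, rfl⟩ := Ideal.mem_span_insert.1 hy
  obtain ⟨c3, rfl⟩ := Ideal.mem_span_singleton'.1 hy2
  rw [map_add, map_add, gen _ (fun k => (main k 0 (by omega)).2.2.1),
    gen _ (fun k => (main k 0 (by omega)).2.1), gen _ (fun k => (main k 0 (by omega)).1)]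
  simp

lemma pext_apply {p : ℕ} (v : Fin p → ℝ) (j : ℕ) (hj : j < p) :
    pext v ((j : ℤ) + 1) = v ⟨j, hj⟩ := by
  have hp : 0 < p := by omega
  simp only [pext, hp, dif_pos]
  congr 1
  apply Fin.ext
  simp only [add_sub_cancel_right]
  rw [Int.emod_eq_of_lt (by omega) (by omega)]
  simp

lemma pext_diff {p : ℕ} (n : ℤ) : Differentiable ℝ (fun v : Fin p → ℝ => pext v n) := by
  unfold pext
  by_cases h : 0 < p
  · simp only [h, dif_pos]; fun_prop
  · simp only [h, dif_neg, not_false_eq_true]; fun_prop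

lemma tMat_diff (p : ℕ) (v w : Fin p → ℝ) (hv : ∀ n, pext v n ≠ 0) (n : ℕ) :
    ∀ i c m, DifferentiableAt ℝ (fun vw : (Fin p → ℝ) × (Fin p → ℝ) =>
      (tMat (pext vw.1) (pext vw.2) n i c).coeff m) (v, w) := by
  have h1 : ∀ k, DifferentiableAt ℝ
      (fun vw : (Fin p → ℝ) × (Fin p → ℝ) => pext vw.1 k) (v, w) := fun k =>
    ((pext_diff k).comp differentiable_fst).differentiableAt
  have h2 : ∀ k, DifferentiableAt ℝ
      (fun vw : (Fin p → ℝ) × (Fin p → ℝ) => pext vw.2 k) (v, w) := fun k =>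
    ((pext_diff k).comp differentiable_snd).differentiableAt
  induction n with
  | zero => intro i c m; simp only [tMat]; fun_prop
  | succ n ih =>
    intro i c m
    fin_cases i
    · simp only [Fin.zero_eta, tMat_succ_zero, Polynomial.coeff_C_mul, sub_mul,
        Polynomial.coeff_sub]
      refine DifferentiableAt.mul ((h1 _).inv (hv _)) (((?_ : DifferentiableAt ℝ _ _).sub
        ((h2 _).mul (ih _ _ _))).sub (ih _ _ _))
      rcases m with _ | m
      · simp
      · simp only [Polynomial.coeff_X_mul]; exact ih _ _ _
    · simp only [Fin.mk_one, tMat_succ_one, Polynomial.coeff_C_mul]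
      exact (h1 _).mul (ih _ _ _)

lemma coeffMap_diff (p : ℕ) (v w : Fin p → ℝ) (hv : ∀ n, pext v n ≠ 0) :
    DifferentiableAt ℝ (coeffMap p) (v, w) := by
  rw [differentiableAt_pi]
  intro i
  simp only [coeffMap, disc, Matrix.trace_fin_two, Polynomial.coeff_add]
  exact (tMat_diff p v w hv p _ _ _).add (tMat_diff p v w hv p _ _ _)

open Polynomial in
lemma disc_update {p : ℕ} (v w : Fin p → ℝ) (j : ℕ) (hj : j < p)
    (hv : ∀ n, pext v n ≠ 0) : ∃ N : Matrix (Fin 2) (Fin 2) ℝ[X],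
    monodromy (pext v) (pext w) p (j + 1) = lamMat (pext v) (pext w) (j + 1) * N ∧
    ∀ s t : ℝ, disc (pext (Function.update v ⟨j, hj⟩ s)) (pext (Function.update w ⟨j, hj⟩ t)) p =
      C s⁻¹ * ((X - C t) * N 0 0 - N 1 0) + C s * N 0 1 := by
  obtain ⟨k, hk⟩ : ∃ k, p = (j + 1) + k := ⟨p - (j + 1), by omega⟩
  obtain ⟨R, -, hR⟩ := split_mat (pext v) (pext w) (j + 1) k
  rw [← hk] at hR
  refine ⟨tMat (pext v) (pext w) j * R, ?_, ?_⟩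
  · rw [mono_eq _ _ hv _ _ R, tMat, Matrix.mul_assoc]
    exact hR _ _ (fun _ _ _ => ⟨rfl, rfl⟩)
  · intro s t
    have agree : ∀ (u : Fin p → ℝ) (r : ℝ) (i : ℕ), 0 < i → i ≤ p → i ≠ j + 1 →
        pext (Function.update u ⟨j, hj⟩ r) (i : ℤ) = pext u (i : ℤ) := by
      intro u r i h0 h1 h2
      obtain ⟨i, rfl⟩ : ∃ m, i = m + 1 := ⟨i - 1, by omega⟩
      push_cast
      rw [pext_apply _ i (by omega), pext_apply _ i (by omega), Function.update_of_ne]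
      intro h
      apply h2
      rw [Fin.mk.injEq] at h
      omega
    have e1 := hR (pext (Function.update v ⟨j, hj⟩ s)) (pext (Function.update w ⟨j, hj⟩ t))
      (fun i hi hi2 => ⟨agree _ _ _ (by omega) (by omega) (by omega),
        agree _ _ _ (by omega) (by omega) (by omega)⟩)
    rw [disc, e1, tMat, tMat_congr (pext v) (pext w) _ _ j
      (fun i hi hi2 => ⟨agree _ _ _ (by omega) (by omega) (by omega),
        agree _ _ _ (by omega) (by omega) (by omega)⟩), Matrix.trace_mul_comm, Matrix.mul_assoc,
      Matrix.trace_fin_two, lam_zero, lam_one, pext_apply _ j hj, pext_apply _ j hj]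
    simp

/-- when all gaps are open, at every point of the isospectral torus
the derivative of the coefficient map of the discriminant is surjective onto
`ℝ^{p+1}` (the gradients of the coefficients span the normal space). -/
theorem statement4 (p : ℕ) (hp : 0 < p)
    (a0 b0 : ℤ → ℝ) (ha0pos : ∀ n, 0 < a0 n)
    (hpera : Function.Periodic a0 (p : ℤ)) (hperb : Function.Periodic b0 (p : ℤ))
    (hgaps : AllGapsOpen a0 b0 p)
    (v w : Fin p → ℝ) (hv : ∀ j, 0 < v j)
    (htorus : InTorus p a0 b0 (pext v) (pext w)) :
    Function.Surjective (fderiv ℝ (coeffMap p) (v, w)) := by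
  have hne : ∀ n, pext v n ≠ 0 := fun n => (htorus.1 n).ne'
  have hg : AllGapsOpen (pext v) (pext w) p := by
    unfold AllGapsOpen at hgaps ⊢
    rw [htorus.2.2.2]; exact hgaps
  have hF := (coeffMap_diff p v w hne).hasFDerivAt
  set F' := fderiv ℝ (coeffMap p) (v, w) with hF'
  by_contra hs
  have hlt : LinearMap.range F'.toLinearMap < ⊤ := by
    rw [lt_top_iff_ne_top]
    intro h
    exact hs (LinearMap.range_eq_top.1 h)
  obtain ⟨l, hl0, hl⟩ := Submodule.exists_le_ker_of_lt_top _ hlt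
  have hlF : ∀ u, l (F' u) = 0 := fun u => hl ⟨u, rfl⟩
  set L : Polynomial ℝ →ₗ[ℝ] ℝ :=
    l.comp (LinearMap.pi (fun i : Fin (p + 1) => Polynomial.lcoeff ℝ (i : ℕ))) with hL
  have hLc : ∀ vw : (Fin p → ℝ) × (Fin p → ℝ),
      l (coeffMap p vw) = L (disc (pext vw.1) (pext vw.2) p) := fun vw => rfl
  have LC : ∀ (c : ℝ) (f : Polynomial ℝ), L (Polynomial.C c * f) = c * L f := by
    intro c f; rw [← Polynomial.smul_eq_C_mul, map_smul, smul_eq_mul]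
  have curve : ∀ (c : ℝ → (Fin p → ℝ) × (Fin p → ℝ)) (c' : (Fin p → ℝ) × (Fin p → ℝ)) (t : ℝ),
      c t = (v, w) → HasDerivAt c c' t →
      HasDerivAt (fun s => L (disc (pext (c s).1) (pext (c s).2) p)) 0 t := by
    intro c c' t hc hd
    have h1 : HasFDerivAt (coeffMap p) F' (c t) := by rw [hc]; exact hF
    have h2 := (LinearMap.toContinuousLinearMap l).hasFDerivAt.comp_hasDerivAt t
      (h1.comp_hasDerivAt t hd)
    have h3 : (LinearMap.toContinuousLinearMap l) (F' c') = 0 := hlF c'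
    rw [h3] at h2
    exact h2
  have fin : ∀ f : Polynomial ℝ, f.natDegree ≤ p → L f = 0 := by
    have both : ∀ j < p, L (monodromy (pext v) (pext w) p (j + 1) 0 0 -
        monodromy (pext v) (pext w) p (j + 1) 1 1) = 0 ∧
        L (monodromy (pext v) (pext w) p (j + 1) 1 0) = 0 := by
      intro j hj
      obtain ⟨N, hN, hd⟩ := disc_update v w j hj hne
      have hvj := (hv ⟨j, hj⟩).ne'
      have d1 := curve (fun t => (v, Function.update w ⟨j, hj⟩ t)) _ (w ⟨j, hj⟩) (by simp)
        ((hasDerivAt_const _ _).prodMk (hasDerivAt_update _ _ _))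
      have d2 := curve (fun t => (Function.update v ⟨j, hj⟩ t, w)) _ (v ⟨j, hj⟩) (by simp)
        ((hasDerivAt_update _ _ _).prodMk (hasDerivAt_const _ _))
      have f1 : (fun t => L (disc (pext v) (pext (Function.update w ⟨j, hj⟩ t)) p)) =
          fun t => (v ⟨j, hj⟩)⁻¹ * (L (Polynomial.X * N 0 0) - t * L (N 0 0) - L (N 1 0)) +
            v ⟨j, hj⟩ * L (N 0 1) := by
        funext t
        have := hd (v ⟨j, hj⟩) t
        rw [Function.update_eq_self] at this
        rw [this, map_add, LC, LC, sub_mul, map_sub, map_sub, LC]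
      have f2 : (fun t => L (disc (pext (Function.update v ⟨j, hj⟩ t)) (pext w) p)) =
          fun t => t⁻¹ * L ((Polynomial.X - Polynomial.C (w ⟨j, hj⟩)) * N 0 0 - N 1 0) +
            t * L (N 0 1) := by
        funext t
        have := hd t (w ⟨j, hj⟩)
        rw [Function.update_eq_self] at this
        rw [this, map_add, LC, LC]
      simp only at d1 d2
      rw [f1] at d1
      rw [f2] at d2
      have g1 := d1.unique ((((((hasDerivAt_id (w ⟨j, hj⟩)).mul_const (L (N 0 0))).const_sub
        (L (Polynomial.X * N 0 0))).sub_const (L (N 1 0))).const_mul (v ⟨j, hj⟩)⁻¹).add_const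
          (v ⟨j, hj⟩ * L (N 0 1)))
      have g2 := d2.unique (((hasDerivAt_inv hvj).mul_const _).add
        ((hasDerivAt_id (v ⟨j, hj⟩)).mul_const (L (N 0 1))))
      have hN00 : L (N 0 0) = 0 := by
        field_simp at g1
        linarith
      rw [hN, lam_zero, lam_one, lam_one, pext_apply _ j hj, pext_apply _ j hj, map_sub, LC, LC,
        LC, hN00]
      refine ⟨?_, by simp⟩
      generalize L ((Polynomial.X - Polynomial.C (w ⟨j, hj⟩)) * N 0 0 - N 1 0) = Q at *
      field_simp at g2 ⊢
      linarith
    exact fun f hf => functional_zero _ _ hne p hp hg L (fun j hj => (both j hj).1)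
      (fun j hj => (both j hj).2) f hf
  apply hl0
  apply LinearMap.ext
  intro u
  have hu := fin (∑ i : Fin (p + 1), Polynomial.monomial (i : ℕ) (u i))
    (Polynomial.natDegree_sum_le_of_forall_le _ _ (fun i _ =>
      (Polynomial.natDegree_monomial_le _).trans (by omega)))
  have hcoef : (fun k : Fin (p + 1) =>
      (∑ i : Fin (p + 1), Polynomial.monomial (i : ℕ) (u i)).coeff (k : ℕ)) = u := by
    funext k
    simp [Polynomial.coeff_monomial, Fin.val_inj]
  have : l (fun k : Fin (p + 1) =>
      (∑ i : Fin (p + 1), Polynomial.monomial (i : ℕ) (u i)).coeff (k : ℕ)) = 0 := hu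
  rw [hcoef] at this
  simpa using this
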